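/- Let p, q be real numbers with q ≠ 0 and let x, y ∈ X be nonzero. (i) If p/q ≥ 1, then α_p[x,y] ≤ (p/q) · α_q[x,y] · ∫₀¹ ‖ (1−t)·‖x‖^(q−1) • x + t·‖y‖^(q−1) • y ‖^(p/q − 1) dt. (ii) If p/q < 1 and x, y are linearly independent, then α_p[x,y] ≤ ((2q − p)/q) · α_q[x,y] · ∫₀¹ ‖ (1−t)·‖x‖^(q−1) • x + t·‖y‖^(q−1) • y ‖^(p/q − 1) dt. -/

import Mathlib

/-- The `p`-angular distance `α_p[x,y] = ‖‖x‖^(p-1) • x - ‖y‖^(p-1) • y‖`. -/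
noncomputable def alphaD {X : Type*} [NormedAddCommGroup X] [NormedSpace ℝ X]
    (p : ℝ) (x y : X) : ℝ :=
  ‖(‖x‖ ^ (p - 1)) • x - (‖y‖ ^ (p - 1)) • y‖

/-!
Put `R_p u = ‖u‖ ^ (p - 1) • u`, so that `α_p[x,y] = ‖R_p x - R_p y‖` and `R_r (R_q x) = R_(r q) x`.
With `r = p / q`, the claim becomes a bound on `‖R_r b - R_r a‖` for `a = R_q x`, `b = R_q y`.
The norm is convex, hence right differentiable along the segment from `a` to `b`, with right
derivative at most `‖b - a‖` in absolute value. So away from the origin `R_r` moves along the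
segment with speed at most `(1 + |r - 1|) * ‖b - a‖ * ‖u‖ ^ (r - 1)`, and one integrates this bound.
The segment passes through the origin at most once; it is cut there, and for `r > 0` both `R_r` and
the integral survive.
-/

open Set Filter Topology MeasureTheory AffineMap

section OriginOnSegment

variable {𝕜 M : Type*} [Field 𝕜] [LinearOrder 𝕜] [IsStrictOrderedRing 𝕜] [AddCommGroup M]
  [Module 𝕜 M] {x y : M}

theorem zero_mem_segment_iff_sameRay_neg : 0 ∈ segment 𝕜 x y ↔ SameRay 𝕜 x (-y) := by
  rw [mem_segment_iff_sameRay, zero_sub, sub_zero, sameRay_neg_swap]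

theorem zero_mem_segment_smul_smul_iff {c d : 𝕜} (hc : 0 < c) (hd : 0 < d) :
    0 ∈ segment 𝕜 (c • x) (d • y) ↔ 0 ∈ segment 𝕜 x y := by
  simp only [zero_mem_segment_iff_sameRay_neg, ← smul_neg]
  refine ⟨fun h ↦ ?_, fun h ↦ (h.pos_smul_left hc).pos_smul_right hd⟩
  simpa only [inv_smul_smul₀ hc.ne', inv_smul_smul₀ hd.ne'] using
    (h.pos_smul_left (inv_pos.2 hc)).pos_smul_right (inv_pos.2 hd)

theorem zero_notMem_segment_of_linearIndependent (h : LinearIndependent 𝕜 ![x, y]) :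
    0 ∉ segment 𝕜 x y := fun h_zero ↦
  sameRay_or_sameRay_neg_iff_not_linearIndependent.1
    (Or.inr (zero_mem_segment_iff_sameRay_neg.1 h_zero)) h

theorem exists_mem_Icc_forall_ne_lineMap_ne_zero (hxy : x ≠ y) :
    ∃ c ∈ Icc (0 : 𝕜) 1, ∀ t ∈ Icc (0 : 𝕜) 1, t ≠ c → lineMap x y t ≠ 0 := by
  by_cases h : ∃ c ∈ Icc (0 : 𝕜) 1, lineMap x y c = 0
  · obtain ⟨c, hc, hc_zero⟩ := h
    exact ⟨c, hc, fun t _ htc ht ↦ htc (lineMap_injective 𝕜 hxy (ht.trans hc_zero.symm))⟩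
  · push Not at h
    exact ⟨0, by simp, fun t ht _ ↦ h t ht⟩

end OriginOnSegment

theorem intervalIntegrable_abs_rpow {s : ℝ} (hs : -1 < s) (a b : ℝ) :
    IntervalIntegrable (fun t : ℝ ↦ |t| ^ s) volume a b := by
  refine intervalIntegrable_of_even (fun t ↦ by rw [abs_neg]) fun c hc ↦ ?_
  refine (intervalIntegral.intervalIntegrable_rpow' hs).congr fun t ht ↦ ?_
  rw [uIoc_of_le hc.le] at ht
  rw [abs_of_pos ht.1]

theorem exists_hasDerivWithinAt_Ioi_norm_lineMap {E : Type*} [SeminormedAddCommGroup E]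
    [NormedSpace ℝ E] (a b : E) (t : ℝ) :
    ∃ d, |d| ≤ ‖b - a‖ ∧ HasDerivWithinAt (fun τ : ℝ ↦ ‖lineMap a b τ‖) d (Ioi t) t := by
  have hconvex : ConvexOn ℝ univ (fun τ : ℝ ↦ ‖lineMap a b τ‖) :=
    convexOn_univ_norm.comp_affineMap (lineMap a b)
  have hderiv := hconvex.hasDerivWithinAt_rightDeriv_of_mem_interior (x := t) (by simp)
  refine ⟨_, le_of_tendsto ((hasDerivWithinAt_iff_tendsto_slope' self_notMem_Ioi).1 hderiv).abs ?_,
    hderiv⟩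
  filter_upwards [self_mem_nhdsWithin] with z hz
  have hzt : 0 < |z - t| := abs_pos.2 (sub_ne_zero.2 (ne_of_gt hz))
  rw [slope_def_field, abs_div, div_le_iff₀ hzt]
  calc |‖lineMap a b z‖ - ‖lineMap a b t‖| ≤ ‖lineMap a b z - lineMap a b t‖ :=
        abs_norm_sub_norm_le _ _
    _ = ‖b - a‖ * |z - t| := by
        rw [← dist_eq_norm, dist_lineMap_lineMap, dist_comm a b, dist_eq_norm b a, Real.dist_eq,
          mul_comm]

section NormedSpace

variable {E : Type*} [NormedAddCommGroup E] [NormedSpace ℝ E]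

theorem norm_sub_le_integral_of_hasDeriv_right_of_norm_le {f f' : ℝ → E} {g : ℝ → ℝ} {a b : ℝ}
    (hab : a ≤ b) (hcont : ContinuousOn f (Icc a b))
    (hderiv : ∀ t ∈ Ioo a b, HasDerivWithinAt f (f' t) (Ioi t) t)
    (hint : IntervalIntegrable g volume a b) (hbound : ∀ t ∈ Ioo a b, ‖f' t‖ ≤ g t) :
    ‖f b - f a‖ ≤ ∫ t in a..b, g t := by
  obtain ⟨φ, hφ, hφ_eq⟩ := exists_dual_vector'' ℝ (f b - f a)
  have hφ_deriv : ∀ t ∈ Ioo a b, HasDerivWithinAt (φ ∘ f) (φ (f' t)) (Ioi t) t := fun t ht ↦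
    φ.hasFDerivAt.comp_hasDerivWithinAt t (hderiv t ht)
  have hφ_le : ∀ t ∈ Ioo a b, φ (f' t) ≤ g t := fun t ht ↦
    calc φ (f' t) ≤ ‖φ (f' t)‖ := Real.le_norm_self _
      _ ≤ 1 * ‖f' t‖ := φ.le_of_opNorm_le hφ _
      _ ≤ g t := by simpa only [one_mul] using hbound t ht
  calc ‖f b - f a‖ = φ (f b) - φ (f a) := by rw [← map_sub, hφ_eq, RCLike.ofReal_real_eq_id, id_eq]
    _ ≤ ∫ t in a..b, g t :=
      intervalIntegral.sub_le_integral_of_hasDeriv_right_of_le hab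
        (φ.continuous.comp_continuousOn hcont) hφ_deriv
        ((intervalIntegrable_iff_integrableOn_Icc_of_le hab).1 hint) hφ_le

theorem intervalIntegrable_norm_lineMap_rpow {s : ℝ} {a b : E}
    (h : -1 < s ∨ 0 ∉ segment ℝ a b) :
    IntervalIntegrable (fun t : ℝ ↦ ‖lineMap a b t‖ ^ s) volume 0 1 := by
  by_cases hzero : 0 ∈ segment ℝ a b
  · have hs : -1 < s := h.resolve_right (not_not_intro hzero)
    rw [segment_eq_image_lineMap] at hzero
    obtain ⟨c, -, hc⟩ := hzero
    have hnorm : ∀ t : ℝ, ‖lineMap a b t‖ = |t - c| * ‖b - a‖ := fun t ↦ by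
      rw [← dist_zero_right, ← hc, dist_lineMap_lineMap, dist_comm a b, dist_eq_norm b a,
        Real.dist_eq]
    simp only [hnorm, Real.mul_rpow (abs_nonneg _) (norm_nonneg _)]
    simpa using ((intervalIntegrable_abs_rpow hs (0 - c) (1 - c)).comp_sub_right c).mul_const _
  · rw [segment_eq_image_lineMap] at hzero
    refine ContinuousOn.intervalIntegrable ?_
    rw [uIcc_of_le zero_le_one]
    exact lineMap_continuous.norm.continuousOn.rpow_const fun t ht ↦
      Or.inl (norm_ne_zero_iff.2 fun ht_zero ↦ hzero ⟨t, ht, ht_zero⟩)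

/-- The radial power map `u ↦ ‖u‖ ^ (r - 1) • u`, which raises norms to the power `r` and keeps
directions; it links the `p`-angular distances for different `p`. It sends `0` to `0` for every
`r`, so for `r ≤ 0` its value at `0` is a convention. -/
noncomputable def radialPow (r : ℝ) (u : E) : E :=
  ‖u‖ ^ (r - 1) • u

theorem norm_radialPow {u : E} (r : ℝ) (hu : u ≠ 0) : ‖radialPow r u‖ = ‖u‖ ^ r := by
  have hu' : 0 < ‖u‖ := norm_pos_iff.2 hu
  rw [radialPow, norm_smul, Real.norm_of_nonneg (by positivity), ← Real.rpow_add_one hu'.ne',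
    sub_add_cancel]

theorem radialPow_radialPow (r q : ℝ) (u : E) :
    radialPow r (radialPow q u) = radialPow (r * q) u := by
  rcases eq_or_ne u 0 with rfl | hu
  · simp only [radialPow, smul_zero]
  have hu' : 0 < ‖u‖ := norm_pos_iff.2 hu
  rw [radialPow, norm_radialPow q hu, radialPow, radialPow, smul_smul, ← Real.rpow_mul hu'.le,
    ← Real.rpow_add hu']
  ring_nf

theorem continuousAt_radialPow {r : ℝ} {u : E} (h : 0 < r ∨ u ≠ 0) :
    ContinuousAt (radialPow r) u := by
  by_cases hu : u = 0
  · subst hu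
    have hr : 0 < r := h.resolve_right (not_not_intro rfl)
    have hlim : Tendsto (fun v : E ↦ ‖v‖ ^ r) (𝓝 0) (𝓝 0) := by
      simpa [Real.zero_rpow hr.ne'] using
        (continuous_norm.rpow_const fun _ ↦ Or.inr hr.le).tendsto (0 : E)
    rw [ContinuousAt, radialPow, smul_zero]
    refine squeeze_zero_norm (fun v ↦ ?_) hlim
    rcases eq_or_ne v 0 with rfl | hv
    · simp [radialPow, Real.zero_rpow hr.ne']
    · exact (norm_radialPow r hv).le
  · exact (continuousAt_id.norm.rpow_const (Or.inl (norm_ne_zero_iff.2 hu))).smul continuousAt_id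

theorem continuousOn_radialPow {r : ℝ} {S : Set E} (h : 0 < r ∨ 0 ∉ S) :
    ContinuousOn (radialPow r) S := fun _ hu ↦
  (continuousAt_radialPow (h.imp_right (ne_of_mem_of_not_mem hu))).continuousWithinAt

theorem exists_hasDerivWithinAt_Ioi_radialPow_lineMap (r : ℝ) {a b : E} {t : ℝ}
    (ht : lineMap a b t ≠ 0) :
    ∃ v, ‖v‖ ≤ (1 + |r - 1|) * ‖b - a‖ * ‖lineMap a b t‖ ^ (r - 1) ∧
      HasDerivWithinAt (fun τ : ℝ ↦ radialPow r (lineMap a b τ)) v (Ioi t) t := by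
  obtain ⟨d, hd, hd_deriv⟩ := exists_hasDerivWithinAt_Ioi_norm_lineMap a b t
  have hderiv := (hd_deriv.rpow_const (p := r - 1) (Or.inl (norm_ne_zero_iff.2 ht))).smul
    (hasDerivAt_lineMap (a := a) (b := b)).hasDerivWithinAt
  refine ⟨_, ?_, hderiv⟩
  set u := lineMap a b t
  have hu : 0 < ‖u‖ := norm_pos_iff.2 ht
  calc ‖‖u‖ ^ (r - 1) • (b - a) + (d * (r - 1) * ‖u‖ ^ (r - 1 - 1)) • u‖
      ≤ ‖‖u‖ ^ (r - 1) • (b - a)‖ + ‖(d * (r - 1) * ‖u‖ ^ (r - 1 - 1)) • u‖ := norm_add_le _ _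
    _ = ‖u‖ ^ (r - 1) * ‖b - a‖ + |d| * |r - 1| * (‖u‖ ^ (r - 1 - 1) * ‖u‖) := by
        simp only [norm_smul, norm_mul, Real.norm_eq_abs, abs_of_pos (Real.rpow_pos_of_pos hu _)]
        ring
    _ = ‖u‖ ^ (r - 1) * ‖b - a‖ + |d| * |r - 1| * ‖u‖ ^ (r - 1) := by
        rw [← Real.rpow_add_one hu.ne', sub_add_cancel]
    _ ≤ ‖u‖ ^ (r - 1) * ‖b - a‖ + ‖b - a‖ * |r - 1| * ‖u‖ ^ (r - 1) := by gcongr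
    _ = (1 + |r - 1|) * ‖b - a‖ * ‖u‖ ^ (r - 1) := by ring

theorem norm_radialPow_lineMap_sub_le {r : ℝ} {a b : E} {t₀ t₁ : ℝ} (ht : t₀ ≤ t₁)
    (hcont : ContinuousOn (fun t : ℝ ↦ radialPow r (lineMap a b t)) (Icc t₀ t₁))
    (hint : IntervalIntegrable (fun t : ℝ ↦ ‖lineMap a b t‖ ^ (r - 1)) volume t₀ t₁)
    (hne : ∀ t ∈ Ioo t₀ t₁, lineMap a b t ≠ 0) :
    ‖radialPow r (lineMap a b t₁) - radialPow r (lineMap a b t₀)‖ ≤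
      (1 + |r - 1|) * ‖b - a‖ * ∫ t in t₀..t₁, ‖lineMap a b t‖ ^ (r - 1) := by
  choose! v hv_le hv_deriv using fun t (ht : t ∈ Ioo t₀ t₁) ↦
    exists_hasDerivWithinAt_Ioi_radialPow_lineMap r (hne t ht)
  rw [← intervalIntegral.integral_const_mul]
  exact norm_sub_le_integral_of_hasDeriv_right_of_norm_le ht hcont hv_deriv
    (hint.const_mul _) hv_le

theorem norm_radialPow_sub_le {r : ℝ} {a b : E} (h : 0 < r ∨ 0 ∉ segment ℝ a b) :
    ‖radialPow r a - radialPow r b‖ ≤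
      (1 + |r - 1|) * ‖a - b‖ * ∫ t in (0 : ℝ)..1, ‖(1 - t) • a + t • b‖ ^ (r - 1) := by
  rcases eq_or_ne a b with rfl | hab
  · simp
  obtain ⟨c, hc, hne⟩ := exists_mem_Icc_forall_ne_lineMap_ne_zero (𝕜 := ℝ) hab
  have hcont : ContinuousOn (fun t : ℝ ↦ radialPow r (lineMap a b t)) (Icc 0 1) :=
    (continuousOn_radialPow h).comp lineMap_continuous.continuousOn fun _ ↦
      lineMap_mem_segment ℝ a b
  have hint : IntervalIntegrable (fun t : ℝ ↦ ‖lineMap a b t‖ ^ (r - 1)) volume 0 1 :=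
    intervalIntegrable_norm_lineMap_rpow (h.imp_left fun hr ↦ by linarith)
  have hc_uIcc : c ∈ uIcc 0 1 := Icc_subset_uIcc hc
  have hint₀ := hint.mono_set (uIcc_subset_uIcc_left hc_uIcc)
  have hint₁ := hint.mono_set (uIcc_subset_uIcc_right hc_uIcc)
  have hbound₀ := norm_radialPow_lineMap_sub_le hc.1 (hcont.mono (Icc_subset_Icc_right hc.2)) hint₀
    fun t ht ↦ hne t ⟨ht.1.le, ht.2.le.trans hc.2⟩ ht.2.ne
  have hbound₁ := norm_radialPow_lineMap_sub_le hc.2 (hcont.mono (Icc_subset_Icc_left hc.1)) hint₁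
    fun t ht ↦ hne t ⟨hc.1.trans ht.1.le, ht.2.le⟩ ht.1.ne'
  simp only [← lineMap_apply_module]
  rw [lineMap_apply_zero] at hbound₀
  rw [lineMap_apply_one] at hbound₁
  rw [norm_sub_rev, norm_sub_rev a, ← intervalIntegral.integral_add_adjacent_intervals hint₀ hint₁,
    mul_add, add_comm]
  exact (norm_sub_le_norm_sub_add_norm_sub _ _ _).trans (add_le_add hbound₁ hbound₀)

end NormedSpace

theorem stmt_15_general {X : Type*} [NormedAddCommGroup X] [NormedSpace ℝ X]
    (p q : ℝ) (hq : q ≠ 0) (x y : X) (hx : x ≠ 0) (hy : y ≠ 0)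
    (h : 0 < p / q ∨ 0 ∉ segment ℝ x y) :
    alphaD p x y ≤ (1 + |p / q - 1|) * alphaD q x y *
      ∫ t in (0 : ℝ)..1,
        ‖(1 - t) • ((‖x‖ ^ (q - 1)) • x) + t • ((‖y‖ ^ (q - 1)) • y)‖ ^ (p / q - 1) := by
  have hsegment : 0 < p / q ∨ 0 ∉ segment ℝ (radialPow q x) (radialPow q y) :=
    h.imp_right <| mt (zero_mem_segment_smul_smul_iff (Real.rpow_pos_of_pos (norm_pos_iff.2 hx) _)
      (Real.rpow_pos_of_pos (norm_pos_iff.2 hy) _)).1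
  have hbound := norm_radialPow_sub_le hsegment
  rwa [radialPow_radialPow, radialPow_radialPow, div_mul_cancel₀ p hq] at hbound

theorem stmt_15 {X : Type*} [NormedAddCommGroup X] [NormedSpace ℝ X]
    (p q : ℝ) (hq : q ≠ 0) (x y : X) (hx : x ≠ 0) (hy : y ≠ 0) :
    (1 ≤ p / q →
      alphaD p x y ≤ (p / q) * alphaD q x y *
        ∫ t in (0 : ℝ)..1,
          ‖(1 - t) • ((‖x‖ ^ (q - 1)) • x) + t • ((‖y‖ ^ (q - 1)) • y)‖ ^ (p / q - 1)) ∧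
    (p / q < 1 → LinearIndependent ℝ ![x, y] →
      alphaD p x y ≤ ((2 * q - p) / q) * alphaD q x y *
        ∫ t in (0 : ℝ)..1,
          ‖(1 - t) • ((‖x‖ ^ (q - 1)) • x) + t • ((‖y‖ ^ (q - 1)) • y)‖ ^ (p / q - 1)) := by
  have hbound := stmt_15_general p q hq x y hx hy
  refine ⟨fun hpq ↦ ?_, fun hpq hxy ↦ ?_⟩
  · simpa only [abs_of_nonneg (sub_nonneg.2 hpq), add_sub_cancel] using
      hbound (Or.inl (zero_lt_one.trans_le hpq))
  · have hcoeff : 1 + |p / q - 1| = (2 * q - p) / q := by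
      rw [abs_of_neg (sub_neg.2 hpq)]; field_simp; ring
    simpa only [hcoeff] using hbound (Or.inr (zero_notMem_segment_of_linearIndependent hxy))
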